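/- Let R be a commutative ring, S an R-module, and e ∈ S such that evaluation at e gives an isomorphism Hom_R(S,S) ≅ S. Then the unique R-bilinear multiplication μ on S with μ(e,e) = e is associative and has e as a two-sided unit, making S a commutative R-algebra with unit e. -/

import Mathlib

theorem stmt_2 {R : Type*} [CommRing R] {S : Type*} [AddCommGroup S] [Module R S] (e : S)
    (he : Function.Bijective fun f : S →ₗ[R] S => f e)
    (μ : S →ₗ[R] S →ₗ[R] S) (hμ : μ e e = e) :
    (∀ x y z : S, μ (μ x y) z = μ x (μ y z)) ∧
    (∀ x : S, μ e x = x) ∧ (∀ x : S, μ x e = x) ∧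
    (∀ x y : S, μ x y = μ y x) := by
  have ext_at_e {f g : S →ₗ[R] S} (h : f e = g e) (x : S) : f x = g x :=
    LinearMap.congr_fun (he.injective h) x
  have left_unit (x : S) : μ e x = x := ext_at_e (g := LinearMap.id) hμ x
  have right_unit (x : S) : μ x e = x := ext_at_e (f := μ.flip e) (g := LinearMap.id) hμ x
  refine ⟨fun x y z => ?_, left_unit, right_unit, fun x y => ?_⟩
  · exact ext_at_e (g := μ x ∘ₗ μ y) (by simp [right_unit]) z
  · exact ext_at_e (g := μ.flip x) (by simp [left_unit, right_unit]) y
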